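/- Let k be an algebraically closed field of characteristic 0, N ≥ 5, and let λ = (λ₁ ≥ … ≥ λ_p ≥ 1) be a partition of N with λ₁ ≥ 3 and j := N − p satisfying 2j < N. Then the Zariski closure in Mat_N(k) of the set {x + y : x, y ∈ O_λ} equals {M ∈ Mat_N(k) : Tr(M) = 0 and rank(M) ≤ 2j}; that is, the conical secant variety of O_λ is the determinantal variety D°_{2j}(N) of trace-zero matrices of rank at most 2j. -/

import Mathlib

open Matrix

noncomputable section

/-- The Zariski closure of a set of `N × N` matrices. -/
def zClosure {k : Type*} [CommRing k] {N : ℕ}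
    (S : Set (Matrix (Fin N) (Fin N) k)) : Set (Matrix (Fin N) (Fin N) k) :=
  {M | ∀ P : MvPolynomial (Fin N × Fin N) k,
      (∀ x ∈ S, MvPolynomial.eval (fun q => x q.1 q.2) P = 0) →
      MvPolynomial.eval (fun q => M q.1 q.2) P = 0}

/-- The set of nilpotent matrices of Jordan type `lam`. -/
def jordanOrbit (k : Type*) [Field k] (N : ℕ) {p : ℕ} (lam : Fin p → ℕ) :
    Set (Matrix (Fin N) (Fin N) k) :=
  {M | ∀ i : ℕ, 1 ≤ i → (M ^ i).rank = ∑ l, (lam l - i)}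

theorem rank_mul_mul_of_inverses {k l m n : Type*} [Field k] [Fintype l] [Fintype m] [Fintype n]
    [DecidableEq m] [DecidableEq n] {o : Type*} [Fintype o]
    {L : Matrix m l k} {U : Matrix l m k}
    {V : Matrix n o k} {R : Matrix o n k} (hL : L * U = 1) (hR : V * R = 1) (Z : Matrix m n k) :
    (U * Z * V).rank = Z.rank := by
  apply le_antisymm
  · exact (rank_mul_le_left _ _).trans (rank_mul_le_right _ _)
  · have h : Z = L * (U * Z * V) * R := by
      calc Z = (L * U) * Z * (V * R) := by rw [hL, hR, Matrix.one_mul, Matrix.mul_one]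
        _ = _ := by simp only [Matrix.mul_assoc]
    conv_lhs => rw [h]
    exact (rank_mul_le_left _ _).trans (rank_mul_le_right _ _)

theorem mul_pow_succ_eq {k m n : Type*} [Field k] [Fintype m] [Fintype n]
    [DecidableEq m] [DecidableEq n] (U : Matrix n m k) (V : Matrix m n k) (i : ℕ) :
    (U * V) ^ (i + 1) = U * (V * U) ^ i * V := by
  induction i with
  | zero => simp
  | succ i ih => rw [pow_succ, ih, pow_succ (V * U)]; simp only [Matrix.mul_assoc]

theorem mul_mem_jordanOrbit {k m : Type*} [Field k] [Fintype m] [DecidableEq m] {N p : ℕ}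
    {lam : Fin p → ℕ} {L V : Matrix m (Fin N) k} {U R : Matrix (Fin N) m k}
    (hL : L * U = 1) (hR : V * R = 1)
    (h : ∀ i, ((V * U) ^ i).rank = ∑ l, (lam l - 1 - i)) :
    U * V ∈ jordanOrbit k N lam := by
  rintro (_ | i) hi
  · omega
  · rw [mul_pow_succ_eq, rank_mul_mul_of_inverses hL hR, h]
    exact Finset.sum_congr rfl fun l _ => by omega

/-- A matrix whose characteristic polynomial is a product of distinct linear factors is
diagonalizable. -/
theorem exists_conj_diagonal {k n : Type*} [Field k] [Fintype n] [DecidableEq n]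
    (B : Matrix n n k) (r : n → k) (hr : Function.Injective r)
    (hB : B.charpoly = ∏ s, (Polynomial.X - Polynomial.C (r s))) :
    ∃ S : Matrix n n k, IsUnit S ∧ B * S = S * diagonal r := by
  have hex : ∀ s, ∃ v : n → k, v ≠ 0 ∧ B *ᵥ v = r s • v := by
    intro s
    have h0 : (scalar n (r s) - B).det = 0 := by
      rw [← eval_charpoly, hB, Polynomial.eval_prod]
      exact Finset.prod_eq_zero (Finset.mem_univ s) (by simp)
    obtain ⟨v, hv, hv'⟩ := exists_mulVec_eq_zero_iff.2 h0
    refine ⟨v, hv, ?_⟩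
    rw [sub_mulVec, sub_eq_zero] at hv'
    rw [← hv']
    ext i
    simp [Matrix.scalar_apply, mulVec_diagonal]
  choose v hv hv' using hex
  have hli : LinearIndependent k v :=
    Module.End.eigenvectors_linearIndependent' (toLin' B) r hr v fun s =>
      ⟨Module.End.mem_eigenspace_iff.2 (by simpa using hv' s), hv s⟩
  refine ⟨(of v)ᵀ, linearIndependent_cols_iff_isUnit.1 hli, ?_⟩
  ext i s
  have := congrFun (hv' s) i
  simp only [mulVec, dotProduct, Pi.smul_apply, smul_eq_mul] at this
  rw [mul_diagonal, mul_apply]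
  simp [this, mul_comm]

theorem exists_conj_of_charpoly_eq {k n : Type*} [Field k] [Fintype n] [DecidableEq n]
    {A B : Matrix n n k} {r : n → k} (hr : Function.Injective r)
    (hA : A.charpoly = ∏ s, (Polynomial.X - Polynomial.C (r s)))
    (hB : B.charpoly = ∏ s, (Polynomial.X - Polynomial.C (r s))) :
    ∃ S T : Matrix n n k, S * T = 1 ∧ T * S = 1 ∧ T * A * S = B := by
  obtain ⟨S, hS, hAS⟩ := exists_conj_diagonal A r hr hA
  obtain ⟨T, hT, hBT⟩ := exists_conj_diagonal B r hr hB
  rw [isUnit_iff_isUnit_det] at hS hT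
  refine ⟨S * T⁻¹, T * S⁻¹, ?_, ?_, ?_⟩
  · rw [Matrix.mul_assoc, nonsing_inv_mul_cancel_left _ _ hT, mul_nonsing_inv _ hS]
  · rw [Matrix.mul_assoc, nonsing_inv_mul_cancel_left _ _ hS, mul_nonsing_inv _ hT]
  · have : T * S⁻¹ * A * (S * T⁻¹) = T * S⁻¹ * (A * S) * T⁻¹ := by simp only [Matrix.mul_assoc]
    rw [this, hAS, ← Matrix.mul_assoc, nonsing_inv_mul_cancel_right _ _ hS, ← hBT,
      mul_nonsing_inv_cancel_right _ _ hT]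

/-- A sum of two elements of a Jordan orbit, built from a factorization `U * V` for which `V * U`
has suitable diagonal blocks. -/
theorem mul_mem_add_jordanOrbit {k m : Type*} [Field k] [Fintype m] [DecidableEq m] {N p : ℕ}
    {lam : Fin p → ℕ} {U : Matrix (Fin N) (m ⊕ m) k} {V : Matrix (m ⊕ m) (Fin N) k}
    (hdet : IsUnit (V * U))
    (h₁ : ∀ i, ((V * U).toBlocks₁₁ ^ i).rank = ∑ l, (lam l - 1 - i))
    (h₂ : ∀ i, ((V * U).toBlocks₂₂ ^ i).rank = ∑ l, (lam l - 1 - i)) :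
    U * V ∈ Set.image2 (· + ·) (jordanOrbit k N lam) (jordanOrbit k N lam) := by
  rw [isUnit_iff_isUnit_det] at hdet
  have hL : ((V * U)⁻¹ * V) * U = 1 := by rw [Matrix.mul_assoc, nonsing_inv_mul _ hdet]
  have hR : V * (U * (V * U)⁻¹) = 1 := by rw [← Matrix.mul_assoc, mul_nonsing_inv _ hdet]
  have key : ∀ f : m → m ⊕ m, Function.Injective f →
      (∀ i, (((V * U).submatrix f f) ^ i).rank = ∑ l, (lam l - 1 - i)) →
      U.submatrix id f * V.submatrix f id ∈ jordanOrbit k N lam := by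
    intro f hf h
    refine mul_mem_jordanOrbit (L := ((V * U)⁻¹ * V).submatrix f id)
      (R := (U * (V * U)⁻¹).submatrix id f) ?_ ?_ ?_
    · rw [← submatrix_mul _ _ _ _ _ Function.bijective_id, hL, submatrix_one _ hf]
    · rw [← submatrix_mul _ _ _ _ _ Function.bijective_id, hR, submatrix_one _ hf]
    · rwa [← submatrix_mul _ _ _ _ _ Function.bijective_id]
  refine ⟨_, key Sum.inl Sum.inl_injective h₁, _, key Sum.inr Sum.inr_injective h₂, ?_⟩
  ext i s
  simp [mul_apply]

/-- A multiple of the matrix unit at an off-diagonal position is conjugate to the matrix with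
constant columns `c`. -/
theorem exists_conj_single {k n : Type*} [Field k] [CharZero k] [Fintype n] [DecidableEq n]
    {i₀ i₁ : n} (hi : i₀ ≠ i₁) (c : n → k) (hc : c i₁ ≠ 0) (hsum : ∑ i, c i = 0) :
    ∃ g h : Matrix n n k, g * h = 1 ∧ h * g = 1 ∧
      h * of (fun _ t => c t) * g = single i₀ i₁ 2 := by
  set h : Matrix n n k := of fun s t =>
    if s = i₁ then c t / 2 else (if s = t then 1 else 0) - if s = i₀ then 0 else
      if t = i₀ then 1 else 0 with hh
  have hdet : IsUnit h.det := by
    rw [isUnit_iff_ne_zero]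
    intro h0
    obtain ⟨v, hv, hv'⟩ := exists_mulVec_eq_zero_iff.2 h0
    have h₀ : v i₀ = 0 := by
      have := congrFun hv' i₀
      simpa [hh, mulVec, dotProduct, hi] using this
    have h₂ : ∀ s, s ≠ i₁ → v s = 0 := by
      intro s hs
      by_cases hs0 : s = i₀
      · rw [hs0, h₀]
      · have := congrFun hv' s
        simpa [hh, mulVec, dotProduct, hs, hs0, sub_mul, h₀, Finset.sum_sub_distrib] using this
    refine hv (funext fun s => ?_)
    by_cases hs : s = i₁
    · subst hs
      have := congrFun hv' s
      simp only [hh, mulVec, dotProduct, of_apply, if_true, Pi.zero_apply] at this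
      rw [Finset.sum_eq_single s (fun t _ ht => by rw [h₂ t ht, mul_zero]) (by simp)] at this
      simpa [hc] using this
    · exact h₂ s hs
  refine ⟨h⁻¹, h, nonsing_inv_mul _ hdet, mul_nonsing_inv _ hdet, ?_⟩
  have key : h * of (fun _ t => c t) = single i₀ i₁ 2 * h := by
    ext s t
    have hrow : ∑ u, h s u = if s = i₀ then 1 else 0 := by
      by_cases hs : s = i₁
      · subst hs
        simp [hh, ← Finset.sum_div, hsum, hi.symm]
      · by_cases hs0 : s = i₀
        · subst hs0
          simp [hh, hs]
        · simp [hh, hs, hs0]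
    rw [mul_apply]
    simp only [of_apply, ← Finset.sum_mul, hrow]
    by_cases hs0 : s = i₀
    · subst hs0
      rw [single_mul_apply_same]
      simp [hh]
      field_simp
    · rw [single_mul_apply_of_ne _ _ _ _ _ hs0]
      simp [hs0]
  rw [key, mul_nonsing_inv_cancel_right _ _ hdet]

theorem charpoly_conj_of_mul_eq_one {k n : Type*} [Field k] [Fintype n] [DecidableEq n]
    {g h : Matrix n n k} (hgh : g * h = 1) (A : Matrix n n k) :
    (h * A * g).charpoly = A.charpoly := by
  rw [charpoly_mul_comm, ← Matrix.mul_assoc, hgh, Matrix.one_mul]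

/-- A multiple of an off-diagonal matrix unit is a sum of two matrices with prescribed
eigenvalues. -/
theorem exists_add_eq_single {k : Type*} [Field k] [CharZero k] {j : ℕ} {i₀ i₁ : Fin j}
    (hi : i₀ ≠ i₁) (a b : Fin j → k) (hc : a i₁ + b i₁ ≠ 0) (hsum : ∑ i, (a i + b i) = 0) :
    ∃ P Q : Matrix (Fin j) (Fin j) k, P + Q = single i₀ i₁ 2 ∧
      P.charpoly = ∏ i, (Polynomial.X - Polynomial.C (a i)) ∧
      Q.charpoly = ∏ i, (Polynomial.X - Polynomial.C (b i)) := by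
  obtain ⟨g, h, hgh, hhg, hs⟩ := exists_conj_single hi (fun i => a i + b i) hc hsum
  set P : Matrix (Fin j) (Fin j) k := of fun s t =>
    if s < t then a t + b t else if s = t then a s else 0 with hP
  set Q : Matrix (Fin j) (Fin j) k := of fun s t =>
    if t < s then a t + b t else if s = t then b s else 0 with hQ
  refine ⟨h * P * g, h * Q * g, ?_, ?_, ?_⟩
  · rw [← hs, ← Matrix.add_mul, ← Matrix.mul_add]
    congr 2
    ext s t
    rcases lt_trichotomy s t with hst | hst | hst
    · simp [hP, hQ, hst, hst.ne, hst.not_gt]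
    · simp [hP, hQ, hst]
    · simp [hP, hQ, hst, hst.ne', hst.not_gt]
  · rw [charpoly_conj_of_mul_eq_one hgh, charpoly_of_isUpperTriangular]
    · simp [hP]
    · intro s t hst
      have : t < s := hst
      simp [hP, this.not_gt, this.ne']
  · rw [charpoly_conj_of_mul_eq_one hgh, ← charpoly_transpose, charpoly_of_isUpperTriangular]
    · simp [hQ]
    · intro s t hst
      have : t < s := hst
      simp [hQ, this.not_gt, this.ne]

/-- Completion of a `2 × 2` block matrix with prescribed diagonal blocks to one with prescribed
characteristic polynomial. -/
theorem exists_charpoly_fromBlocks_eq {k n : Type*} [Field k] [Fintype n] [DecidableEq n]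
    {X Y P Q : Matrix n n k} (h : P + Q = X + Y) :
    ∃ E : Matrix n n k, (fromBlocks X 1 E Y).charpoly = P.charpoly * Q.charpoly := by
  refine ⟨P * (X - Q) - (X - Q) * X, ?_⟩
  have hgh : fromBlocks 1 0 (-(X - Q)) 1 * fromBlocks 1 0 (X - Q) 1
      = (1 : Matrix (n ⊕ n) (n ⊕ n) k) := by
    simp [fromBlocks_multiply]
  rw [← charpoly_conj_of_mul_eq_one hgh, mul_comm P.charpoly, ← charpoly_fromBlocks_zero₂₁ Q 1 P]
  have hY : Y = P + Q - X := by rw [h]; abel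
  congr 1
  rw [fromBlocks_multiply, fromBlocks_multiply, hY]
  congr 1
  · simp
  · simp
  · simp only [Matrix.one_mul, Matrix.mul_one]
    noncomm_ring
  · simp

/-- The nilpotent matrix in Jordan form with blocks of sizes `nu l`. -/
def jordanShift (k : Type*) [Field k] {p : ℕ} (nu : Fin p → ℕ) :
    Matrix (Σ l, Fin (nu l)) (Σ l, Fin (nu l)) k :=
  of fun s t => if s.1 = t.1 ∧ t.2.val = s.2.val + 1 then 1 else 0

theorem jordanShift_apply (k : Type*) [Field k] {p : ℕ} (nu : Fin p → ℕ) (s t : Σ l, Fin (nu l)) :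
    jordanShift k nu s t = if s.1 = t.1 ∧ t.2.val = s.2.val + 1 then 1 else 0 :=
  rfl

theorem jordanShift_pow_apply (k : Type*) [Field k] {p : ℕ} (nu : Fin p → ℕ) (i : ℕ)
    (s t : Σ l, Fin (nu l)) :
    (jordanShift k nu ^ i) s t = if s.1 = t.1 ∧ t.2.val = s.2.val + i then 1 else 0 := by
  induction i generalizing t with
  | zero =>
    rw [pow_zero, one_apply]
    congr 1
    obtain ⟨l, x⟩ := s
    obtain ⟨l', y⟩ := t
    simp only [Sigma.mk.injEq, add_zero, eq_iff_iff]
    refine and_congr_right fun h => ?_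
    subst h
    simp [Fin.ext_iff, eq_comm]
  | succ i ih =>
    rw [pow_succ, mul_apply]
    simp only [ih, jordanShift_apply]
    obtain ⟨l, x⟩ := s
    obtain ⟨l', y⟩ := t
    by_cases h : l = l' ∧ y.val = x.val + (i + 1)
    · obtain ⟨rfl, hy⟩ := h
      rw [Finset.sum_eq_single ⟨l, ⟨x.val + i, by omega⟩⟩]
      · simp [hy, add_assoc]
      · rintro ⟨l', z⟩ - hz
        by_contra hne
        simp only [mul_ite, mul_one, mul_zero, ite_eq_right_iff, not_forall] at hne
        obtain ⟨⟨rfl, h₁⟩, ⟨-, h₂⟩, -⟩ := hne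
        exact hz (by simp only [Sigma.mk.injEq, true_and, heq_eq_eq, Fin.ext_iff]; omega)
      · simp
    · rw [if_neg h]
      refine Finset.sum_eq_zero fun z _ => ?_
      by_contra hne
      simp only [mul_ite, mul_one, mul_zero, ite_eq_right_iff, not_forall] at hne
      obtain ⟨⟨h₁, h₂⟩, ⟨h₃, h₄⟩, -⟩ := hne
      exact h ⟨h₃.trans h₁, by omega⟩

theorem rank_jordanShift_pow (k : Type*) [Field k] {p : ℕ} (nu : Fin p → ℕ) (i : ℕ) :
    (jordanShift k nu ^ i).rank = ∑ l, (nu l - i) := by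
  let src : (Σ l, Fin (nu l - i)) → Σ l, Fin (nu l) := fun s => ⟨s.1, ⟨s.2.val, by omega⟩⟩
  let tgt : (Σ l, Fin (nu l - i)) → Σ l, Fin (nu l) := fun s => ⟨s.1, ⟨s.2.val + i, by omega⟩⟩
  have hsrc : Function.Injective src := by
    rintro ⟨l, x⟩ ⟨l', y⟩ h
    simp only [src, Sigma.mk.injEq] at h
    obtain ⟨rfl, h⟩ := h
    simpa [Fin.ext_iff] using h
  have htgt : Function.Injective tgt := by
    rintro ⟨l, x⟩ ⟨l', y⟩ h
    simp only [tgt, Sigma.mk.injEq] at h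
    obtain ⟨rfl, h⟩ := h
    simpa [Fin.ext_iff] using h
  have hL : (1 : Matrix (Σ l, Fin (nu l)) (Σ l, Fin (nu l)) k).submatrix src id
      * (1 : Matrix (Σ l, Fin (nu l)) (Σ l, Fin (nu l)) k).submatrix id src = 1 := by
    rw [← submatrix_mul _ _ _ _ _ Function.bijective_id, Matrix.one_mul, submatrix_one _ hsrc]
  have hR : (1 : Matrix (Σ l, Fin (nu l)) (Σ l, Fin (nu l)) k).submatrix tgt id
      * (1 : Matrix (Σ l, Fin (nu l)) (Σ l, Fin (nu l)) k).submatrix id tgt = 1 := by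
    rw [← submatrix_mul _ _ _ _ _ Function.bijective_id, Matrix.one_mul, submatrix_one _ htgt]
  have hfac : jordanShift k nu ^ i = (1 : Matrix (Σ l, Fin (nu l)) (Σ l, Fin (nu l)) k).submatrix id src
      * (1 : Matrix (Σ l, Fin (nu l - i)) (Σ l, Fin (nu l - i)) k)
      * (1 : Matrix (Σ l, Fin (nu l)) (Σ l, Fin (nu l)) k).submatrix tgt id := by
    rw [Matrix.mul_one]
    ext s t
    rw [jordanShift_pow_apply, mul_apply]
    simp only [submatrix_apply, id_eq, one_apply, mul_ite, mul_one, mul_zero]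
    obtain ⟨l, x⟩ := s
    obtain ⟨l', y⟩ := t
    split_ifs with h
    · obtain ⟨rfl, hy⟩ := h
      simp only at hy
      rw [Finset.sum_eq_single ⟨l, ⟨x.val, by omega⟩⟩]
      · simp [src, tgt, Fin.ext_iff, hy]
      · intro u _ hu
        by_contra hne
        simp only [ite_eq_right_iff, not_forall] at hne
        obtain ⟨-, h₂, -⟩ := hne
        exact hu (hsrc h₂.symm)
      · simp
    · symm
      refine Finset.sum_eq_zero fun u _ => ?_
      by_contra hne
      simp only [ite_eq_right_iff, not_forall] at hne
      obtain ⟨h₁, h₂, -⟩ := hne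
      have h₃ : (⟨l, x⟩ : Σ l, Fin (nu l)).1 = u.1 := congrArg Sigma.fst h₂
      obtain ⟨u₁, u₂⟩ := u
      simp only at h₃
      subst h₃
      simp only [tgt, src, Sigma.mk.injEq, true_and, heq_eq_eq] at h₁ h₂
      obtain ⟨rfl, h₁⟩ := h₁
      simp only [heq_eq_eq] at h₁
      exact h ⟨rfl, by simp [← h₁, h₂]⟩
  rw [hfac, rank_mul_mul_of_inverses hL hR, rank_one]
  simp

/-- Two nilpotent matrices of the same Jordan type whose sum is a multiple of a matrix unit. -/
theorem exists_jordan_add_eq_single (k : Type*) [Field k] {p j : ℕ} (nu : Fin p → ℕ) (l₀ : Fin p)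
    (hl₀ : 2 ≤ nu l₀) (hj : ∑ l, nu l = j) :
    ∃ (X Y : Matrix (Fin j) (Fin j) k) (i₀ i₁ : Fin j), i₀ ≠ i₁ ∧ X + Y = single i₀ i₁ 2 ∧
      (∀ i, (X ^ i).rank = ∑ l, (nu l - i)) ∧ (∀ i, (Y ^ i).rank = ∑ l, (nu l - i)) := by
  obtain ⟨e⟩ : Nonempty ((Σ l, Fin (nu l)) ≃ Fin j) :=
    ⟨Fintype.equivFinOfCardEq (by simp [hj])⟩
  let s₀ : Σ l, Fin (nu l) := ⟨l₀, ⟨0, by omega⟩⟩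
  let s₁ : Σ l, Fin (nu l) := ⟨l₀, ⟨1, by omega⟩⟩
  let J := jordanShift k nu
  let D : Matrix (Σ l, Fin (nu l)) (Σ l, Fin (nu l)) k :=
    diagonal fun s => if s = s₀ then -1 else (-1) ^ s.2.val
  have hD : D * D = 1 := by
    rw [diagonal_mul_diagonal, ← diagonal_one]
    congr 1
    ext s
    split_ifs
    · simp
    · rw [← mul_pow]; simp
  have hsum : J + D * J * D = single s₀ s₁ 2 := by
    ext s t
    simp only [Matrix.add_apply, D, diagonal_mul, mul_diagonal, J, jordanShift_apply, single_apply]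
    obtain ⟨l, x⟩ := s
    obtain ⟨l', y⟩ := t
    by_cases h : l = l' ∧ y.val = x.val + 1
    · obtain ⟨rfl, hy⟩ := h
      have hy₀ : (⟨l, y⟩ : Σ l, Fin (nu l)) ≠ s₀ := by
        intro h
        simp only [s₀, Sigma.mk.injEq] at h
        obtain ⟨rfl, h⟩ := h
        simp only [heq_eq_eq, Fin.ext_iff] at h
        omega
      by_cases hx : (⟨l, x⟩ : Σ l, Fin (nu l)) = s₀
      · have hx' := hx
        simp only [s₀, Sigma.mk.injEq] at hx'
        obtain ⟨rfl, hx'⟩ := hx'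
        simp only [heq_eq_eq, Fin.ext_iff] at hx'
        have hy₁ : s₁ = ⟨l, y⟩ := by
          simp only [s₁, Sigma.mk.injEq, true_and, heq_eq_eq, Fin.ext_iff]
          omega
        have hy' : y.val = 1 := by omega
        simp only [hx, hy₀, hy₁, hy', hx', if_true, if_false, and_self]
        norm_num
      · simp only [hy, hx, hy₀, Ne.symm hx, if_true, if_false, and_self, false_and, pow_succ,
          mul_one, mul_neg, ← mul_pow]
        simp
    · have h' : ¬ (s₀ = ⟨l, x⟩ ∧ s₁ = ⟨l', y⟩) := by
        rintro ⟨h₁, h₂⟩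
        simp only [s₀, s₁, Sigma.mk.injEq] at h₁ h₂
        obtain ⟨rfl, h₁⟩ := h₁
        obtain ⟨rfl, h₂⟩ := h₂
        simp only [heq_eq_eq] at h₁ h₂
        exact h ⟨rfl, by simp [← h₁, ← h₂]⟩
      simp [h, h']
  have hpow : ∀ (Z : Matrix (Σ l, Fin (nu l)) (Σ l, Fin (nu l)) k) (i : ℕ),
      ((Z.submatrix e.symm e.symm) ^ i).rank = (Z ^ i).rank := by
    intro Z i
    have : Z.submatrix e.symm e.symm ^ i = (Z ^ i).submatrix e.symm e.symm :=
      (map_pow (reindexAlgEquiv k k e) Z i).symm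
    rw [this, rank_submatrix]
  refine ⟨J.submatrix e.symm e.symm, (D * J * D).submatrix e.symm e.symm, e s₀, e s₁, ?_, ?_, ?_,
    ?_⟩
  · intro h
    have := e.injective h
    simp [s₀, s₁] at this
  · have := congrArg (fun Z => Z.submatrix e.symm e.symm) hsum
    ext s t
    have := congrFun (congrFun this s) t
    simpa [single_apply, Equiv.eq_symm_apply] using this
  · intro i
    rw [hpow, rank_jordanShift_pow]
  · intro i
    have hDJ : (D * J * D) ^ i = D * J ^ i * D := by
      induction i with
      | zero => simp [hD]
      | succ i ih =>
        rw [pow_succ, ih, pow_succ]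
        calc D * J ^ i * D * (D * J * D) = D * J ^ i * (D * D) * J * D := by
              simp only [Matrix.mul_assoc]
          _ = _ := by rw [hD]; simp only [Matrix.mul_assoc, Matrix.mul_one]
    rw [hpow, hDJ, rank_mul_mul_of_inverses hD hD, rank_jordanShift_pow]

theorem exists_injective_charpoly_eq_prod {k n : Type*} [Field k] [IsAlgClosed k] [Fintype n]
    [DecidableEq n] (A : Matrix n n k) (hA : A.charpoly.Separable) :
    ∃ r : n → k, Function.Injective r ∧
      A.charpoly = ∏ s, (Polynomial.X - Polynomial.C (r s)) := by
  classical
  have hsplit := IsAlgClosed.splits A.charpoly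
  have hnd := Polynomial.nodup_roots hA
  have hcard : A.charpoly.roots.toFinset.card = Fintype.card n := by
    rw [Multiset.toFinset_card_of_nodup hnd, ← hsplit.natDegree_eq_card_roots,
      charpoly_natDegree_eq_dim]
  let e : n ≃ A.charpoly.roots.toFinset := Fintype.equivOfCardEq (by simp [hcard])
  refine ⟨fun s => (e s).1, Subtype.val_injective.comp e.injective, ?_⟩
  conv_lhs => rw [hsplit.eq_prod_roots_of_monic A.charpoly_monic]
  rw [Equiv.prod_comp e (fun x => Polynomial.X - Polynomial.C x.1),
    Finset.prod_coe_sort _ (fun x => Polynomial.X - Polynomial.C x), Finset.prod,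
    Multiset.toFinset_val, hnd.dedup]

/-- If `V * U` is invertible of trace zero with separable characteristic polynomial, then `U * V`
is a sum of two elements of the Jordan orbit. -/
theorem mul_mem_add_jordanOrbit_of_separable {k : Type*} [Field k] [IsAlgClosed k] [CharZero k]
    {N p j : ℕ} {lam : Fin p → ℕ} (l₀ : Fin p) (hl₀ : 3 ≤ lam l₀) (hj : ∑ l, (lam l - 1) = j)
    {U : Matrix (Fin N) (Fin j ⊕ Fin j) k} {V : Matrix (Fin j ⊕ Fin j) (Fin N) k}
    (htr : (V * U).trace = 0) (hdet : (V * U).det ≠ 0) (hsep : (V * U).charpoly.Separable) :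
    U * V ∈ Set.image2 (· + ·) (jordanOrbit k N lam) (jordanOrbit k N lam) := by
  obtain ⟨X, Y, i₀, i₁, hi, hXY, hX, hY⟩ :=
    exists_jordan_add_eq_single k (fun l => lam l - 1) l₀ (by omega) hj
  obtain ⟨r, hr, hchar, hr₁⟩ : ∃ r : Fin j ⊕ Fin j → k, Function.Injective r ∧
      (V * U).charpoly = ∏ s, (Polynomial.X - Polynomial.C (r s)) ∧
      r (Sum.inl i₁) + r (Sum.inr i₁) ≠ 0 := by
    obtain ⟨r, hr, hchar⟩ := exists_injective_charpoly_eq_prod _ hsep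
    by_cases h : r (Sum.inl i₁) + r (Sum.inr i₁) = 0
    · refine ⟨r ∘ Equiv.swap (Sum.inr i₁) (Sum.inr i₀), hr.comp (Equiv.injective _), ?_, ?_⟩
      · rw [hchar, ← Equiv.prod_comp (Equiv.swap (Sum.inr i₁) (Sum.inr i₀))]
        rfl
      · intro h'
        rw [Function.comp, Function.comp, Equiv.swap_apply_left,
          Equiv.swap_apply_of_ne_of_ne (by simp) (by simp), ← h] at h'
        exact hi (Sum.inr_injective (hr (add_left_cancel h')))
    · exact ⟨r, hr, hchar, h⟩
  have hsum : ∑ i, (r (Sum.inl i) + r (Sum.inr i)) = 0 := by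
    rw [Finset.sum_add_distrib, ← Fintype.sum_sum_type r, ← htr, trace_eq_sum_roots_charpoly, hchar,
      Polynomial.roots_prod _ _ (Finset.prod_ne_zero_iff.2 fun s _ => Polynomial.X_sub_C_ne_zero _)]
    simp [Multiset.bind_singleton]
  obtain ⟨P, Q, hPQ, hP, hQ⟩ := exists_add_eq_single hi (fun i => r (Sum.inl i))
    (fun i => r (Sum.inr i)) hr₁ hsum
  obtain ⟨E, hE⟩ := exists_charpoly_fromBlocks_eq (hPQ.trans hXY.symm)
  rw [hP, hQ, ← Fintype.prod_sum_type fun s => Polynomial.X - Polynomial.C (r s)] at hE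
  obtain ⟨S, T, hST, hTS, hconj⟩ := exists_conj_of_charpoly_eq hr hchar hE
  have hUV : U * V = (U * S) * (T * V) := by
    rw [Matrix.mul_assoc, ← Matrix.mul_assoc S, hST, Matrix.one_mul]
  have hVU : (T * V) * (U * S) = fromBlocks X 1 E Y := by
    rw [← hconj]
    simp only [Matrix.mul_assoc]
  rw [hUV]
  refine mul_mem_add_jordanOrbit ?_ ?_ ?_
  · have hu : ∀ Z W : Matrix (Fin j ⊕ Fin j) (Fin j ⊕ Fin j) k, Z * W = 1 → IsUnit Z :=
      fun Z W h => ⟨⟨Z, W, h, mul_eq_one_comm.1 h⟩, rfl⟩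
    rw [hVU, ← hconj]
    exact ((hu _ _ hTS).mul ((isUnit_iff_isUnit_det _).2 hdet.isUnit)).mul (hu _ _ hST)
  · simpa only [hVU, toBlocks_fromBlocks₁₁] using hX
  · simpa only [hVU, toBlocks_fromBlocks₂₂] using hY

/-- On the line through `A` and `B`, being invertible with separable characteristic polynomial is
an open condition. -/
theorem exists_polynomial_separable {k n : Type*} [Field k] [CharZero k] [Fintype n]
    [DecidableEq n] (A B : Matrix n n k) (hB : B.charpoly.Separable) (hB' : B.det ≠ 0) :
    ∃ q : Polynomial k, q ≠ 0 ∧ ∀ t, q.eval t ≠ 0 →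
      ((1 - t) • A + t • B).charpoly.Separable ∧ ((1 - t) • A + t • B).det ≠ 0 := by
  let M : Matrix n n (Polynomial k) := (1 - Polynomial.X : Polynomial k) • A.map Polynomial.C
    + (Polynomial.X : Polynomial k) • B.map Polynomial.C
  have hM : ∀ t, M.map (Polynomial.evalRingHom t) = (1 - t) • A + t • B := by
    intro t
    ext i j
    simp [M, mul_comm t]
  let q := M.charpoly.resultant M.charpoly.derivative (Fintype.card n) (Fintype.card n - 1) * M.det
  have hdeg : ∀ Z : Matrix n n k, Z.charpoly.derivative.natDegree = Fintype.card n - 1 := by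
    intro Z
    rw [Polynomial.natDegree_derivative, charpoly_natDegree_eq_dim]
  have hq : ∀ t, q.eval t ≠ 0 ↔
      ((1 - t) • A + t • B).charpoly.Separable ∧ ((1 - t) • A + t • B).det ≠ 0 := by
    intro t
    have h₁ : (M.charpoly.resultant M.charpoly.derivative (Fintype.card n)
        (Fintype.card n - 1)).eval t = ((1 - t) • A + t • B).charpoly.resultant
          ((1 - t) • A + t • B).charpoly.derivative := by
      rw [hdeg, charpoly_natDegree_eq_dim, ← hM, charpoly_map, Polynomial.derivative_map,
        Polynomial.resultant_map_map]
      rfl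
    have h₂ : M.det.eval t = ((1 - t) • A + t • B).det := by
      rw [← hM, ← RingHom.mapMatrix_apply, ← RingHom.map_det]
      rfl
    rw [Polynomial.eval_mul, h₁, h₂, mul_ne_zero_iff, Ne, Polynomial.resultant_eq_zero_iff,
      Polynomial.Separable]
    have := (charpoly_monic ((1 - t) • A + t • B)).ne_zero
    simp [this]
  refine ⟨q, ?_, fun t => (hq t).1⟩
  intro h0
  have := (hq 1).2 (by simpa using ⟨hB, hB'⟩)
  simp [h0] at this

/-- A matrix of rank at most `card m` factors through `m`, with left factor left-invertible. -/
theorem exists_factorization_of_rank_le {k m : Type*} [Field k] [Fintype m] [DecidableEq m] {N : ℕ}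
    (M : Matrix (Fin N) (Fin N) k) (hM : M.rank ≤ Fintype.card m) (hm : Fintype.card m ≤ N) :
    ∃ (U : Matrix (Fin N) m k) (V L : Matrix m (Fin N) k), L * U = 1 ∧ U * V = M := by
  obtain ⟨A, B, e, hA, hB, hE⟩ := exists_rank_normal_form M
  rw [isUnit_iff_isUnit_det] at hA hB
  have hcard : M.rank + (Fintype.card (Fin N) - M.rank) = N := by
    rw [Fintype.card_fin]; omega
  let e' : Fin N ≃ Fin N := e.trans (finSumFinEquiv.trans (finCongr hcard))
  let f : m → Fin N := fun i => e'.symm (Fin.castLE hm (Fintype.equivFin m i))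
  have hf : Function.Injective f :=
    e'.symm.injective.comp ((Fin.castLE_injective hm).comp (Fintype.equivFin m).injective)
  have hrow : ∀ s, s ∉ Set.range f → ∀ t, (A * M) s t = 0 := by
    intro s hs t
    have hs' : ∃ x, e s = Sum.inr x := by
      rcases h : e s with x | x
      · refine absurd ⟨(Fintype.equivFin m).symm ⟨x.val, by omega⟩, ?_⟩ hs
        simp only [f, Equiv.apply_symm_apply, Equiv.symm_apply_eq]
        ext
        simp [e', h]
      · exact ⟨x, rfl⟩
    obtain ⟨x, hx⟩ := hs'
    have hAM : A * M = (fromBlocks 1 0 0 0).submatrix e e * B⁻¹ := by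
      rw [← hE, mul_nonsing_inv_cancel_right _ _ hB]
    rw [hAM, mul_apply]
    refine Finset.sum_eq_zero fun u _ => ?_
    rcases h : e u with y | y <;> simp [hx, h]
  refine ⟨A⁻¹.submatrix id f, (A * M).submatrix f id, A.submatrix f id, ?_, ?_⟩
  · rw [← submatrix_mul _ _ _ _ _ Function.bijective_id, mul_nonsing_inv _ hA, submatrix_one _ hf]
  · have h : A⁻¹ * (A * M) = M := nonsing_inv_mul_cancel_left _ _ hA
    conv_rhs => rw [← h]
    ext s t
    rw [mul_apply, mul_apply]
    simp only [submatrix_apply, id_eq]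
    exact Fintype.sum_of_injective f hf _ _ (fun u hu => by rw [hrow u hu, mul_zero]) fun _ => rfl

theorem eval_matrix_mul_mul_det {k m : Type*} [Field k] [Fintype m] [DecidableEq m] {N : ℕ}
    (A : Matrix m (Fin N) k) (B : Matrix (Fin N) m k) (M : Matrix (Fin N) (Fin N) k) :
    MvPolynomial.eval (fun q : Fin N × Fin N => M q.1 q.2)
      (det (Matrix.map A (MvPolynomial.C (σ := Fin N × Fin N)) * mvPolynomialX (Fin N) (Fin N) k
        * Matrix.map B (MvPolynomial.C (σ := Fin N × Fin N)))) = (A * M * B).det := by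
  rw [RingHom.map_det]
  congr 1
  ext i t
  simp [mul_apply]

theorem rank_le_of_mem_zClosure {k : Type*} [Field k] {N r : ℕ}
    {S : Set (Matrix (Fin N) (Fin N) k)} (hS : ∀ x ∈ S, x.rank ≤ r)
    {M : Matrix (Fin N) (Fin N) k} (hM : M ∈ zClosure S) : M.rank ≤ r := by
  by_contra! hlt
  obtain ⟨A, B, e, -, -, hE⟩ := exists_rank_normal_form M
  let f : Fin M.rank → Fin N := fun i => e.symm (Sum.inl i)
  have h₁ : A.submatrix f id * M * B.submatrix id f = 1 := by
    have : A.submatrix f id * M * B.submatrix id f = (A * M * B).submatrix f f := by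
      ext i t
      simp [mul_apply]
    rw [this, hE]
    ext i t
    simp [f, one_apply]
  have h := hM _ fun x hx => (eval_matrix_mul_mul_det (A.submatrix f id) (B.submatrix id f) x).trans
    (by
      by_contra hne
      have h₂ := rank_of_det_ne_zero hne
      have h₃ := (rank_mul_le_left (A.submatrix f id * x) (B.submatrix id f)).trans
        (rank_mul_le_right _ _)
      rw [h₂, Fintype.card_fin] at h₃
      exact absurd (h₃.trans (hS x hx)) (by omega))
  rw [eval_matrix_mul_mul_det, h₁, det_one] at h
  exact one_ne_zero h

theorem rank_add_le_add_rank {k m n : Type*} [Field k] [Fintype m] [Fintype n]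
    (A B : Matrix m n k) : (A + B).rank ≤ A.rank + B.rank := by
  rw [rank, mulVecLin_add]
  exact (Submodule.finrank_mono (LinearMap.range_add_le _ _)).trans
    (Submodule.finrank_add_le_finrank_add_finrank _ _)

theorem trace_eq_zero_of_mem_zClosure {k : Type*} [Field k] {N : ℕ}
    {S : Set (Matrix (Fin N) (Fin N) k)} (hS : ∀ x ∈ S, x.trace = 0)
    {M : Matrix (Fin N) (Fin N) k} (hM : M ∈ zClosure S) : M.trace = 0 := by
  have h := hM (∑ i, MvPolynomial.X (i, i)) fun x hx => by
    simpa [trace] using hS x hx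
  simpa [trace] using h

theorem trace_eq_zero_of_mem_jordanOrbit {k : Type*} [Field k] {N p : ℕ} {lam : Fin p → ℕ}
    {x : Matrix (Fin N) (Fin N) k} (hx : x ∈ jordanOrbit k N lam) : x.trace = 0 := by
  have h : (x ^ (∑ l, lam l + 1)).rank = 0 := by
    rw [hx _ (by omega)]
    refine Finset.sum_eq_zero fun l _ => ?_
    have := Finset.single_le_sum (f := lam) (fun _ _ => Nat.zero_le _) (Finset.mem_univ l)
    omega
  rw [rank, Submodule.finrank_eq_zero, LinearMap.range_eq_bot] at h
  exact (isNilpotent_trace_of_isNilpotent ⟨_, toLin'.map_eq_zero_iff.1 h⟩).eq_zero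

/-- If a line of matrices lies in `S` away from the zeros of a nonzero polynomial, all of it lies
in the Zariski closure of `S`. -/
theorem mem_zClosure_of_line {k : Type*} [Field k] [Infinite k] {N : ℕ}
    {S : Set (Matrix (Fin N) (Fin N) k)} {A B : Matrix (Fin N) (Fin N) k} {q : Polynomial k}
    (hq : q ≠ 0) (h : ∀ t, q.eval t ≠ 0 → (1 - t) • A + t • B ∈ S) : A ∈ zClosure S := by
  intro P hP
  let F : Polynomial k := MvPolynomial.eval₂ Polynomial.C (fun s =>
    (1 - Polynomial.X) * Polynomial.C (A s.1 s.2) + Polynomial.X * Polynomial.C (B s.1 s.2)) P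
  have hF : ∀ t, F.eval t = MvPolynomial.eval (fun s => ((1 - t) • A + t • B) s.1 s.2) P := by
    intro t
    change Polynomial.evalRingHom t F = _
    rw [MvPolynomial.hom_eval₂, MvPolynomial.eval, MvPolynomial.coe_eval₂Hom]
    congr 1
    · ext; simp
    · ext; simp [mul_comm t]
  have hFq : F * q = 0 := by
    refine Polynomial.funext fun t => ?_
    rw [Polynomial.eval_mul, Polynomial.eval_zero]
    by_cases ht : q.eval t = 0
    · rw [ht, mul_zero]
    · rw [hF, hP _ (h t ht), zero_mul]
  have hF0 : F = 0 := (mul_eq_zero.1 hFq).resolve_right hq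
  have := hF 0
  simpa [hF0] using this.symm

/-- A trace-zero matrix with distinct nonzero eigenvalues. -/
theorem exists_separable_trace_zero (k : Type*) [Field k] [CharZero k] (j : ℕ) :
    ∃ D : Matrix (Fin j ⊕ Fin j) (Fin j ⊕ Fin j) k,
      D.trace = 0 ∧ D.det ≠ 0 ∧ D.charpoly.Separable := by
  let d : Fin j ⊕ Fin j → k := Sum.elim (fun i => (i.val : k) + 1) (fun i => -((i.val : k) + 1))
  have hd : ∀ s, d s ≠ 0 := by
    rintro (i | i)
    · exact Nat.cast_add_one_ne_zero _
    · exact neg_ne_zero.2 (Nat.cast_add_one_ne_zero _)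
  have hne : ∀ a b : ℕ, (a : k) + 1 ≠ -((b : k) + 1) := by
    intro a b h
    have : ((a + 1 + (b + 1) : ℕ) : k) = 0 := by
      push_cast
      rw [h]
      ring
    exact absurd (Nat.cast_eq_zero.1 this) (by omega)
  have hinj : Function.Injective d := by
    rintro (a | a) (b | b) h
    · simpa [d, Fin.ext_iff] using h
    · exact absurd h (hne _ _)
    · exact absurd h.symm (hne _ _)
    · simpa [d, Fin.ext_iff, add_comm] using h
  refine ⟨diagonal d, ?_, ?_, ?_⟩
  · simp [trace, d, Finset.sum_add_distrib]
  · rw [det_diagonal]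
    exact Finset.prod_ne_zero_iff.2 fun s _ => hd s
  · rw [charpoly_diagonal]
    exact Polynomial.separable_prod_X_sub_C_iff.2 hinj

/-- If `λ₁ ≥ 3` and `j = N − p` with `2j < N`, then the conical secant variety of `O_λ`
is the determinantal variety of trace-zero matrices of rank at most `2j`. -/
theorem stmt1 {k : Type*} [Field k] [IsAlgClosed k] [CharZero k]
    {N p j : ℕ} (hN : 5 ≤ N) (hp : 0 < p) (lam : Fin p → ℕ)
    (hanti : Antitone lam) (hpos : ∀ l, 1 ≤ lam l)
    (hsum : ∑ l, lam l = N)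
    (hl1 : 3 ≤ lam ⟨0, hp⟩)
    (hj : j = N - p) (hjN : 2 * j < N) :
    zClosure (Set.image2 (· + ·) (jordanOrbit k N lam) (jordanOrbit k N lam))
      = {M : Matrix (Fin N) (Fin N) k | Matrix.trace M = 0 ∧ M.rank ≤ 2 * j} := by
  have hsum' : ∑ l, (lam l - 1) = j := by
    have h : ∑ l, (lam l - 1) + p = N := by
      rw [← hsum]
      calc ∑ l, (lam l - 1) + p = ∑ l, (lam l - 1 + 1) := by simp [Finset.sum_add_distrib]
        _ = ∑ l, lam l := Finset.sum_congr rfl fun l _ => Nat.sub_add_cancel (hpos l)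
    omega
  apply Set.Subset.antisymm
  · intro M hM
    refine ⟨trace_eq_zero_of_mem_zClosure ?_ hM, rank_le_of_mem_zClosure ?_ hM⟩
    · rintro _ ⟨x, hx, y, hy, rfl⟩
      simp only [trace_add, trace_eq_zero_of_mem_jordanOrbit hx,
        trace_eq_zero_of_mem_jordanOrbit hy, add_zero]
    · rintro _ ⟨x, hx, y, hy, rfl⟩
      have hx₁ := hx 1 le_rfl
      have hy₁ := hy 1 le_rfl
      rw [pow_one, hsum'] at hx₁ hy₁
      have := rank_add_le_add_rank x y
      simp only
      omega
  · rintro M ⟨htr, hrank⟩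
    obtain ⟨U, V, L, hLU, rfl⟩ := exists_factorization_of_rank_le (m := Fin j ⊕ Fin j) M
      (by simpa [two_mul] using hrank) (by simp; omega)
    obtain ⟨D, hDtr, hDdet, hDsep⟩ := exists_separable_trace_zero k j
    obtain ⟨q, hq, hqt⟩ := exists_polynomial_separable (V * U) D hDsep hDdet
    refine mem_zClosure_of_line (B := U * (D * L)) hq fun t ht => ?_
    obtain ⟨h₁, h₂⟩ := hqt t ht
    have hVU : ((1 - t) • V + t • (D * L)) * U = (1 - t) • (V * U) + t • D := by
      rw [Matrix.add_mul, Matrix.smul_mul, Matrix.smul_mul, Matrix.mul_assoc D, hLU, Matrix.mul_one]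
    have hUV : (1 - t) • (U * V) + t • (U * (D * L)) = U * ((1 - t) • V + t • (D * L)) := by
      rw [Matrix.mul_add, Matrix.mul_smul, Matrix.mul_smul]
    rw [hUV]
    refine mul_mem_add_jordanOrbit_of_separable ⟨0, hp⟩ hl1 hsum' ?_ ?_ ?_
    · rw [hVU, trace_add, trace_smul, trace_smul, hDtr, trace_mul_comm, htr]
      simp
    · rwa [hVU]
    · rwa [hVU]
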